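/- arXiv:1711.11206 — 7 statements merged into one kernel-verified Lean document; each statement's English description precedes it below -/
import Mathlib

section
/- For every integer k ≥ 1 and every real p with r₁² < p < r₂², one has Ψ_sp(k,p) ≥ (Γ((k+2)/2) / (√π · k · Γ((k+1)/2))) · exp(−(k−1)·R_sp(p)), where Γ denotes the Gamma function. -/
open MeasureTheory Metric

/-- The uniform (normalized surface-area) probability measure on the sphere of radius `r`
centered at the origin in `ℝ^k`, viewed as a measure on the ambient space. -/
noncomputable def sphereUniform (k : ℕ) (r : ℝ) :
    Measure (EuclideanSpace ℝ (Fin k)) :=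
  ((volume : Measure (EuclideanSpace ℝ (Fin k))).toSphere Set.univ)⁻¹ •
    Measure.map
      (fun x : sphere (0 : EuclideanSpace ℝ (Fin k)) 1 => r • (x : EuclideanSpace ℝ (Fin k)))
      (volume : Measure (EuclideanSpace ℝ (Fin k))).toSphere

/-- `Ψ_sp(k,p)`: the probability that a uniform point `Ŝ` on the sphere of radius
`√(k(σ²-D))` satisfies `(1/k)‖s - Ŝ‖² ≤ D`, where `s` is a fixed vector with `‖s‖² = kp`
(here the constant vector with entries `√p`). -/
noncomputable def PsiSp (σ D : ℝ) (k : ℕ) (p : ℝ) : ℝ :=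
  (sphereUniform k (Real.sqrt (k * (σ ^ 2 - D)))
    {x : EuclideanSpace ℝ (Fin k) |
      ‖(EuclideanSpace.equiv (Fin k) ℝ).symm (fun _ => Real.sqrt p) - x‖ ^ 2 ≤ k * D}).toReal

/-- `R_sp(p)` -/
noncomputable def Rsp (σ D p : ℝ) : ℝ :=
  -(1 / 2) * Real.log (1 - (p + σ ^ 2 - 2 * D) ^ 2 / (4 * p * (σ ^ 2 - D)))


lemma exists_onb_first {E : Type*} [NormedAddCommGroup E] [InnerProductSpace ℝ E]
    [FiniteDimensional ℝ E] (n : ℕ) (h : Module.finrank ℝ E = n + 1) (u : E) (hu : ‖u‖ = 1) :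
    ∃ b : OrthonormalBasis (Fin (n + 1)) ℝ E, b 0 = u := by
  have hv : Orthonormal ℝ (({0} : Set (Fin (n + 1))).domRestrict (fun _ => u)) := by
    refine ⟨fun i => by simpa using hu, fun i j hij => ?_⟩
    exact absurd (Subsingleton.elim i j) hij
  obtain ⟨b, hb⟩ := hv.exists_orthonormalBasis_extension_of_card_eq (by simpa using h)
  exact ⟨b, hb 0 (by simp)⟩

lemma exists_coords (n : ℕ) (u : EuclideanSpace ℝ (Fin (n + 1))) (hu : ‖u‖ = 1) :
    ∃ Φ : EuclideanSpace ℝ (Fin n) × ℝ → EuclideanSpace ℝ (Fin (n + 1)),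
      MeasurePreserving Φ ((volume : Measure (EuclideanSpace ℝ (Fin n))).prod volume) volume ∧
      (∀ z, inner ℝ u (Φ z) = z.2) ∧ ∀ z, ‖Φ z‖ ^ 2 = ‖z.1‖ ^ 2 + z.2 ^ 2 := by
  have hW : Module.finrank ℝ (WithLp 2 (EuclideanSpace ℝ (Fin n) × ℝ)) = n + 1 := by
    rw [(WithLp.linearEquiv 2 ℝ (EuclideanSpace ℝ (Fin n) × ℝ)).finrank_eq]
    simp
  let e : WithLp 2 (EuclideanSpace ℝ (Fin n) × ℝ) := WithLp.toLp 2 (0, 1)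
  have he : ‖e‖ = 1 := by
    have := WithLp.prod_norm_sq_eq_of_L2 e
    have h2 : ‖e‖ ^ 2 = 1 := by rw [this]; simp [e]
    nlinarith [norm_nonneg e]
  obtain ⟨b, hb⟩ := exists_onb_first n (by simp) u hu
  obtain ⟨b', hb'⟩ := exists_onb_first n hW e he
  let L : WithLp 2 (EuclideanSpace ℝ (Fin n) × ℝ) ≃ₗᵢ[ℝ] EuclideanSpace ℝ (Fin (n + 1)) := b'.equiv b (Equiv.refl _)
  have hL : L e = u := by
    rw [← hb', ← hb]; simp [L]
  refine ⟨fun z => L (WithLp.toLp 2 z), ?_, ?_, ?_⟩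
  · exact L.measurePreserving.comp (WithLp.volume_preserving_toLp _ _)
  · intro z
    rw [← hL, LinearIsometryEquiv.inner_map_map]
    simp [e, WithLp.prod_inner_apply]
  · intro z
    rw [L.norm_map, WithLp.prod_norm_sq_eq_of_L2]
    simp

lemma lintegral_cone (n : ℕ) (s : ℝ) (hs : 0 < s) :
    ∫⁻ y in ball (0 : EuclideanSpace ℝ (Fin n)) s, ENNReal.ofReal (1 - ‖y‖ / s) =
      ENNReal.ofReal (s ^ n / (n + 1)) *
        volume (ball (0 : EuclideanSpace ℝ (Fin n)) 1) := by
  have h1 := volume_regionBetween_eq_lintegral' (μ := (volume : Measure (EuclideanSpace ℝ (Fin n))))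
    (f := fun _ => (0 : ℝ)) (g := fun y => 1 - ‖y‖ / s) (s := ball 0 s)
    (by fun_prop) (by fun_prop) measurableSet_ball
  have h2 : MeasurableSet (regionBetween (fun _ => (0 : ℝ))
      (fun y : EuclideanSpace ℝ (Fin n) => 1 - ‖y‖ / s) (ball 0 s)) :=
    measurableSet_regionBetween (by fun_prop) (by fun_prop) measurableSet_ball
  simp only [Pi.sub_apply, sub_zero] at h1
  rw [← h1, Measure.prod_apply_symm h2]
  have h3 : ∀ t : ℝ, volume ((fun y : EuclideanSpace ℝ (Fin n) => (y, t)) ⁻¹'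
      (regionBetween (fun _ => (0 : ℝ)) (fun y => 1 - ‖y‖ / s) (ball 0 s))) =
      (Set.Ioo (0 : ℝ) 1).indicator (fun t => ENNReal.ofReal ((s * (1 - t)) ^ n) *
        volume (ball (0 : EuclideanSpace ℝ (Fin n)) 1)) t := by
    intro t
    by_cases ht : t ∈ Set.Ioo (0 : ℝ) 1
    · rw [Set.indicator_of_mem ht]
      have : ((fun y : EuclideanSpace ℝ (Fin n) => (y, t)) ⁻¹'
        (regionBetween (fun _ => (0 : ℝ)) (fun y => 1 - ‖y‖ / s) (ball 0 s))) =
          ball 0 (s * (1 - t)) := by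
        ext y
        have : t < 1 - ‖y‖ / s ↔ ‖y‖ < s * (1 - t) := by
          rw [lt_sub_comm, div_lt_iff₀ hs, mul_comm]
        simp only [regionBetween, Set.mem_preimage, Set.mem_ofPred_eq, mem_ball_zero_iff,
          Set.mem_Ioo, this]
        constructor
        · rintro ⟨_, _, h⟩; exact h
        · intro h
          exact ⟨by nlinarith [ht.1], ht.1, h⟩
      rw [this, Measure.addHaar_ball_of_pos _ _ (mul_pos hs (by linarith [ht.2]))]
      simp
    · rw [Set.indicator_of_notMem ht]
      convert measure_empty (μ := (volume : Measure (EuclideanSpace ℝ (Fin n))))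
      ext y
      simp only [regionBetween, Set.mem_preimage, Set.mem_ofPred_eq, mem_ball_zero_iff,
          Set.mem_Ioo, Set.mem_empty_iff_false, iff_false]
      rintro ⟨_, h, h'⟩
      exact ht ⟨h, h'.trans_le (by have : 0 ≤ ‖y‖ / s := by positivity
                                   linarith)⟩
  simp_rw [h3]
  rw [lintegral_indicator measurableSet_Ioo, lintegral_mul_const _ (by fun_prop)]
  congr 1
  rw [← ofReal_integral_eq_lintegral_ofReal]
  · congr 1
    rw [← integral_Ioc_eq_integral_Ioo, ← intervalIntegral.integral_of_le zero_le_one]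
    simp_rw [mul_pow]
    rw [intervalIntegral.integral_const_mul,
      intervalIntegral.integral_comp_sub_left (fun x => x ^ n) 1]
    simp [div_eq_mul_inv]
  · exact (Continuous.integrableOn_Icc (by fun_prop)).mono_set Set.Ioo_subset_Icc_self
  · filter_upwards [ae_restrict_mem measurableSet_Ioo] with t ht
    have := ht.2
    have : 0 ≤ 1 - t := by linarith
    positivity

lemma region_bound (c s r t : ℝ) (hs : 0 < s) (hcs : c ^ 2 + s ^ 2 = 1) (hr : 0 ≤ r) (hrs : r < s)
    (h1 : c * (r / s) < t) (h2 : t < 1 + (c - 1) * (r / s)) :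
    0 < r ^ 2 + t ^ 2 ∧ r ^ 2 + t ^ 2 < 1 ∧ c * √(r ^ 2 + t ^ 2) ≤ t := by
  obtain ⟨l, rfl⟩ : ∃ l, r = s * l := ⟨r / s, by field_simp⟩
  have e : s * l / s = l := by field_simp
  rw [e] at h1 h2
  have hl : 0 ≤ l := by
    by_contra h; push Not at h; nlinarith
  have hl1 : l < 1 := by
    by_contra h; push Not at h; nlinarith
  have hc1 : c < 1 := by nlinarith
  have hc2 : -1 < c := by nlinarith
  refine ⟨?_, ?_, ?_⟩
  · rcases hl.eq_or_lt with h | h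
    · subst h
      have : 0 < t := by linarith
      positivity
    · positivity
  · have hm : (1 + (c - 1) * l) ^ 2 + (s * l) ^ 2 ≤ 1 := by
      have : (1 + (c - 1) * l) ^ 2 + (s * l) ^ 2 = 1 - 2 * (1 - c) * (l * (1 - l)) := by
        linear_combination l ^ 2 * hcs
      have : 0 ≤ (1 - c) * (l * (1 - l)) :=
        mul_nonneg (by linarith) (mul_nonneg hl (by linarith))
      linarith
    have ha : (c * l) ^ 2 + (s * l) ^ 2 < 1 := by
      have : (c * l) ^ 2 + (s * l) ^ 2 = l ^ 2 := by linear_combination l ^ 2 * hcs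
      nlinarith
    rcases le_or_gt 0 t with h | h
    · nlinarith
    · nlinarith
  · rcases le_or_gt 0 c with hc | hc
    · have ht : 0 ≤ t := by nlinarith
      rw [← Real.sqrt_sq hc, ← Real.sqrt_mul (sq_nonneg _)]
      apply Real.sqrt_le_iff.2 ⟨ht, ?_⟩
      have : (c * l) ^ 2 ≤ t ^ 2 := pow_le_pow_left₀ (by positivity) h1.le 2
      have := mul_le_mul_of_nonneg_left this (sq_nonneg s)
      have e1 : t ^ 2 = c ^ 2 * t ^ 2 + s ^ 2 * t ^ 2 := by linear_combination (-t ^ 2) * hcs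
      nlinarith
    · rcases le_or_gt 0 t with h | h
      · exact (mul_nonpos_of_nonpos_of_nonneg hc.le (Real.sqrt_nonneg _)).trans h
      · have : -t ≤ -c * √((s * l) ^ 2 + t ^ 2) := by
          rw [← Real.sqrt_sq (by linarith : 0 ≤ -c), ← Real.sqrt_mul (sq_nonneg _)]
          apply Real.le_sqrt_of_sq_le
          have : (-t) ^ 2 ≤ (-(c * l)) ^ 2 := pow_le_pow_left₀ (by linarith) (by linarith) 2
          have := mul_le_mul_of_nonneg_left this (sq_nonneg s)
          have e1 : t ^ 2 = c ^ 2 * t ^ 2 + s ^ 2 * t ^ 2 := by linear_combination (-t ^ 2) * hcs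
          nlinarith
        linarith

lemma sector_volume (n : ℕ) (u : EuclideanSpace ℝ (Fin (n + 1))) (hu : ‖u‖ = 1)
    (c s : ℝ) (hs : 0 < s) (hcs : c ^ 2 + s ^ 2 = 1) :
    ENNReal.ofReal (s ^ n / (n + 1)) * volume (ball (0 : EuclideanSpace ℝ (Fin n)) 1) ≤
      volume {x : EuclideanSpace ℝ (Fin (n + 1)) | 0 < ‖x‖ ∧ ‖x‖ < 1 ∧ c * ‖x‖ ≤ inner ℝ u x} := by
  obtain ⟨Φ, hΦ, hin, hno⟩ := exists_coords n u hu
  have h1 := volume_regionBetween_eq_lintegral' (μ := (volume : Measure (EuclideanSpace ℝ (Fin n))))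
    (f := fun y => c * (‖y‖ / s)) (g := fun y => 1 + (c - 1) * (‖y‖ / s)) (s := ball 0 s)
    (by fun_prop) (by fun_prop) measurableSet_ball
  have h2 : ∀ y : EuclideanSpace ℝ (Fin n), 1 + (c - 1) * (‖y‖ / s) - c * (‖y‖ / s) =
      1 - ‖y‖ / s := by
    intro y; ring
  simp only [Pi.sub_apply, h2] at h1
  rw [← lintegral_cone n s hs, ← h1]
  have hm : MeasurableSet {x : EuclideanSpace ℝ (Fin (n + 1)) |
      0 < ‖x‖ ∧ ‖x‖ < 1 ∧ c * ‖x‖ ≤ inner ℝ u x} := by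
    have m1 : MeasurableSet {x : EuclideanSpace ℝ (Fin (n + 1)) | 0 < ‖x‖} :=
      measurableSet_lt (by fun_prop) (by fun_prop)
    have m2 : MeasurableSet {x : EuclideanSpace ℝ (Fin (n + 1)) | ‖x‖ < 1} :=
      measurableSet_lt (by fun_prop) (by fun_prop)
    have m3 : MeasurableSet {x : EuclideanSpace ℝ (Fin (n + 1)) | c * ‖x‖ ≤ inner ℝ u x} :=
      measurableSet_le (by fun_prop) (by fun_prop)
    exact m1.inter (m2.inter m3)
  rw [← hΦ.measure_preimage hm.nullMeasurableSet]
  apply measure_mono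
  rintro ⟨y, t⟩ ⟨hy, ht1, ht2⟩
  simp only [mem_ball_zero_iff] at hy ht1 ht2
  have hn := hno (y, t)
  obtain ⟨q1, q2, q3⟩ := region_bound c s ‖y‖ t hs hcs (norm_nonneg _) hy ht1 ht2
  simp only at hn
  rw [← hn] at q1 q2 q3
  rw [Real.sqrt_sq (norm_nonneg _)] at q3
  refine ⟨?_, ?_, ?_⟩
  · exact (norm_nonneg _).lt_of_ne fun h => by rw [← h] at q1; simp at q1
  · nlinarith [norm_nonneg (Φ (y, t))]
  · rw [hin]; exact q3

lemma volume_unit_ball (n : ℕ) :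
    volume (ball (0 : EuclideanSpace ℝ (Fin n)) 1) =
      ENNReal.ofReal (√Real.pi ^ n / Real.Gamma ((n : ℝ) / 2 + 1)) := by
  rcases n with _ | n
  · have : ball (0 : EuclideanSpace ℝ (Fin 0)) 1 = Set.univ := by
      ext x; simp [Subsingleton.elim x 0]
    rw [this, ← (PiLp.volume_preserving_toLp (Fin 0)).measure_preimage
      MeasurableSet.univ.nullMeasurableSet]
    simp [volume_pi]
  · rw [EuclideanSpace.volume_ball]
    simp

open scoped Pointwise in
lemma sphere_lower (n : ℕ) (u : EuclideanSpace ℝ (Fin (n + 1))) (hu : ‖u‖ = 1)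
    (c s r : ℝ) (hs : 0 < s) (hcs : c ^ 2 + s ^ 2 = 1) (S : Set (EuclideanSpace ℝ (Fin (n + 1))))
    (hS : MeasurableSet S)
    (h : ∀ w : EuclideanSpace ℝ (Fin (n + 1)), ‖w‖ = 1 → c ≤ inner ℝ u w → r • w ∈ S) :
    (√Real.pi ^ (n + 1) / Real.Gamma (((n + 1 : ℕ) : ℝ) / 2 + 1))⁻¹ *
      (s ^ n / (n + 1) * (√Real.pi ^ n / Real.Gamma ((n : ℝ) / 2 + 1))) ≤
    (sphereUniform (n + 1) r S).toReal := by
  have hV : ∀ m : ℕ, 0 < √Real.pi ^ m / Real.Gamma ((m : ℝ) / 2 + 1) := fun m =>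
    div_pos (pow_pos (Real.sqrt_pos.2 Real.pi_pos) _) (Real.Gamma_pos_of_pos (by positivity))
  have hf : Measurable (fun x : sphere (0 : EuclideanSpace ℝ (Fin (n + 1))) 1 =>
      r • (x : EuclideanSpace ℝ (Fin (n + 1)))) := by fun_prop
  have hsub : {x : EuclideanSpace ℝ (Fin (n + 1)) | 0 < ‖x‖ ∧ ‖x‖ < 1 ∧ c * ‖x‖ ≤ inner ℝ u x} ⊆
      Set.Ioo (0 : ℝ) 1 • ((↑) '' ((fun x : sphere (0 : EuclideanSpace ℝ (Fin (n + 1))) 1 =>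
      r • (x : EuclideanSpace ℝ (Fin (n + 1)))) ⁻¹' S) :
        Set (EuclideanSpace ℝ (Fin (n + 1)))) := by
    rintro x ⟨h0, h1, h2⟩
    have hw : ‖‖x‖⁻¹ • x‖ = 1 := by
      rw [norm_smul, norm_inv, norm_norm, inv_mul_cancel₀ h0.ne']
    refine Set.mem_smul.2 ⟨‖x‖, ⟨h0, h1⟩, ‖x‖⁻¹ • x, ⟨⟨‖x‖⁻¹ • x, by simpa using hw⟩, ?_, rfl⟩, ?_⟩
    · refine h _ hw ?_
      rw [inner_smul_right, inv_mul_eq_div, le_div_iff₀ h0]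
      exact h2
    · rw [smul_smul, mul_inv_cancel₀ h0.ne', one_smul]
  have hkey := (sector_volume n u hu c s hs hcs).trans (measure_mono hsub)
  have heq : sphereUniform (n + 1) r S =
      ENNReal.ofReal ((√Real.pi ^ (n + 1) / Real.Gamma (((n + 1 : ℕ) : ℝ) / 2 + 1))⁻¹) *
      volume (Set.Ioo (0 : ℝ) 1 • ((↑) '' ((fun x : sphere (0 : EuclideanSpace ℝ (Fin (n + 1))) 1 =>
      r • (x : EuclideanSpace ℝ (Fin (n + 1)))) ⁻¹' S) :
        Set (EuclideanSpace ℝ (Fin (n + 1))))) := by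
    rw [sphereUniform, Measure.smul_apply, Measure.map_apply hf hS, smul_eq_mul,
      Measure.toSphere_apply' _ (hf hS), Measure.toSphere_apply_univ, volume_unit_ball,
      ENNReal.ofReal_inv_of_pos (hV _), ENNReal.mul_inv (by simp) (by simp), ← mul_assoc]
    congr 1
    rw [mul_right_comm, ENNReal.inv_mul_cancel (by simp) (by simp), one_mul]
  have hfin : sphereUniform (n + 1) r S ≠ ⊤ := by
    rw [heq]
    refine ENNReal.mul_ne_top ENNReal.ofReal_ne_top (ne_top_of_le_ne_top
      (measure_ball_lt_top (μ := volume) (x := (0 : EuclideanSpace ℝ (Fin (n + 1)))) (r := 1)).ne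
      (measure_mono ?_))
    intro x hx
    obtain ⟨t, ht, y, ⟨w, _, rfl⟩, rfl⟩ := Set.mem_smul.1 hx
    have : ‖(w : EuclideanSpace ℝ (Fin (n + 1)))‖ = 1 := by simp
    rw [mem_ball_zero_iff, norm_smul, this, mul_one, Real.norm_eq_abs, abs_of_pos ht.1]
    exact ht.2
  rw [← ENNReal.ofReal_le_iff_le_toReal hfin, heq,
    ENNReal.ofReal_mul (inv_nonneg.2 (hV _).le), ENNReal.ofReal_mul (by positivity)]
  rw [volume_unit_ball] at hkey
  gcongr

theorem stmt1 (σ D : ℝ) (hσ : 0 < σ) (hD : 0 < D) (hDσ : D < σ ^ 2)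
    (k : ℕ) (hk : 1 ≤ k) (p : ℝ)
    (hp1 : (Real.sqrt (σ ^ 2 - D) - Real.sqrt D) ^ 2 < p)
    (hp2 : p < (Real.sqrt (σ ^ 2 - D) + Real.sqrt D) ^ 2) :
    PsiSp σ D k p ≥
      Real.Gamma (((k : ℝ) + 2) / 2) / (Real.sqrt Real.pi * k * Real.Gamma (((k : ℝ) + 1) / 2)) *
        Real.exp (-((k : ℝ) - 1) * Rsp σ D p) := by
  obtain ⟨n, rfl⟩ : ∃ n, k = n + 1 := ⟨k - 1, by omega⟩
  have hp : 0 < p := (sq_nonneg _).trans_lt hp1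
  have ha2 : 0 < σ ^ 2 - D := by linarith
  obtain ⟨a, ha, haa⟩ : ∃ a, 0 < a ∧ √(σ ^ 2 - D) = a := ⟨_, Real.sqrt_pos.2 ha2, rfl⟩
  obtain ⟨q, hq, hqq⟩ : ∃ a, 0 < a ∧ √p = a := ⟨_, Real.sqrt_pos.2 hp, rfl⟩
  obtain ⟨d, hd, hdd⟩ : ∃ a, 0 < a ∧ √D = a := ⟨_, Real.sqrt_pos.2 hD, rfl⟩
  have ha' : a ^ 2 = σ ^ 2 - D := by rw [← haa, Real.sq_sqrt ha2.le]
  have hq' : q ^ 2 = p := by rw [← hqq, Real.sq_sqrt hp.le]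
  have hd' : d ^ 2 = D := by rw [← hdd, Real.sq_sqrt hD.le]
  rw [haa, hdd, ← hq'] at hp1 hp2
  have hqad : q < a + d := lt_of_pow_lt_pow_left₀ 2 (by positivity) hp2
  have habs : |a - d| < q := abs_lt_of_sq_lt_sq hp1 hq.le
  obtain ⟨hx1, hx2⟩ := abs_lt.1 habs
  obtain ⟨c, hc⟩ : ∃ c, c = (q ^ 2 + a ^ 2 - d ^ 2) / (2 * q * a) := ⟨_, rfl⟩
  have hcm : 2 * q * a * c = q ^ 2 + a ^ 2 - d ^ 2 := by rw [hc]; field_simp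
  have hc1 : c < 1 := by
    rw [hc, div_lt_one (by positivity)]
    nlinarith
  have hc2 : -1 < c := by
    rw [hc, lt_div_iff₀ (by positivity)]
    nlinarith
  have hc3 : 0 < 1 - c ^ 2 := by nlinarith
  have hR : Real.exp (-(((n + 1 : ℕ) : ℝ) - 1) * Rsp σ D p) = √(1 - c ^ 2) ^ n := by
    have e1 : (p + σ ^ 2 - 2 * D) ^ 2 / (4 * p * (σ ^ 2 - D)) = c ^ 2 := by
      rw [← ha', ← hq', hc, div_pow]
      congr 1
      · rw [hd', ha']; ring
      · ring
    rw [Rsp, e1, ← Real.exp_log (Real.sqrt_pos.2 hc3), ← Real.exp_nat_mul,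
      Real.log_sqrt hc3.le]
    congr 1
    push_cast
    ring
  have hcs : c ^ 2 + √(1 - c ^ 2) ^ 2 = 1 := by rw [Real.sq_sqrt hc3.le]; ring
  rw [hR]
  obtain ⟨v, hv⟩ : ∃ v, v = (EuclideanSpace.equiv (Fin (n + 1)) ℝ).symm (fun _ => √p) := ⟨_, rfl⟩
  have hvn : ‖v‖ ^ 2 = ((n + 1 : ℕ) : ℝ) * q ^ 2 := by
    rw [hv, EuclideanSpace.norm_sq_eq, hqq]
    simp
  have hk0 : (0 : ℝ) < ((n + 1 : ℕ) : ℝ) := by positivity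
  have hvn' : ‖v‖ = √((n + 1 : ℕ) : ℝ) * q := by
    rw [← Real.sqrt_sq (norm_nonneg v), hvn, Real.sqrt_mul hk0.le, Real.sqrt_sq hq.le]
  have hvpos : 0 < ‖v‖ := by rw [hvn']; positivity
  have hr : √(((n + 1 : ℕ) : ℝ) * (σ ^ 2 - D)) = √((n + 1 : ℕ) : ℝ) * a := by
    rw [Real.sqrt_mul hk0.le, haa]
  rw [PsiSp, ← hv, hr]
  refine le_trans (le_of_eq ?_) (sphere_lower n (‖v‖⁻¹ • v)
    (by rw [norm_smul, norm_inv, norm_norm, inv_mul_cancel₀ hvpos.ne']) c (√(1 - c ^ 2)) _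
    (Real.sqrt_pos.2 hc3) hcs _ (measurableSet_le (by fun_prop) (by fun_prop)) ?_)
  · have g1 : (((n + 1 : ℕ) : ℝ) + 2) / 2 = ((n + 1 : ℕ) : ℝ) / 2 + 1 := by ring
    have g2 : (((n + 1 : ℕ) : ℝ) + 1) / 2 = (n : ℝ) / 2 + 1 := by push_cast; ring
    rw [g1, g2]
    have p1 : 0 < Real.Gamma (((n + 1 : ℕ) : ℝ) / 2 + 1) := Real.Gamma_pos_of_pos (by positivity)
    have p2 : 0 < Real.Gamma ((n : ℝ) / 2 + 1) := Real.Gamma_pos_of_pos (by positivity)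
    have p3 : 0 < √Real.pi := Real.sqrt_pos.2 Real.pi_pos
    generalize Real.Gamma (((n + 1 : ℕ) : ℝ) / 2 + 1) = G1 at *
    generalize Real.Gamma ((n : ℝ) / 2 + 1) = G2 at *
    push_cast
    field_simp
    ring
  · intro w hw hcw
    rw [inner_smul_left, RCLike.conj_to_real, inv_mul_eq_div, le_div_iff₀ hvpos, hvn'] at hcw
    change ‖v - _‖ ^ 2 ≤ _
    rw [norm_sub_sq_real, hvn, inner_smul_right, norm_smul, hw, mul_one, Real.norm_eq_abs, sq_abs,
      mul_pow, Real.sq_sqrt hk0.le, ← hd']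
    have h1 := mul_le_mul_of_nonneg_left hcw (by positivity : 0 ≤ 2 * (√((n + 1 : ℕ) : ℝ) * a))
    have h2 : 2 * (√((n + 1 : ℕ) : ℝ) * a) * (c * (√((n + 1 : ℕ) : ℝ) * q)) =
        ((n + 1 : ℕ) : ℝ) * (q ^ 2 + a ^ 2 - d ^ 2) := by
      rw [← hcm]
      linear_combination (2 * a * c * q) * Real.sq_sqrt hk0.le
    linarith
end

section
/- The function R_sp is strictly increasing above the point |σ²−2D|: for all real numbers p, p' with r₁² < p, |σ²−2D| ≤ p, and p < p' < r₂², one has R_sp(p) < R_sp(p'). -/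
theorem stmt3 (σ D : ℝ) (hσ : 0 < σ) (hD : 0 < D) (hDσ : D < σ ^ 2)
    (p p' : ℝ)
    (hp1 : (Real.sqrt (σ ^ 2 - D) - Real.sqrt D) ^ 2 < p)
    (hp2 : |σ ^ 2 - 2 * D| ≤ p)
    (hpp' : p < p')
    (hp'2 : p' < (Real.sqrt (σ ^ 2 - D) + Real.sqrt D) ^ 2) :
    Rsp σ D p < Rsp σ D p' := by
  have ha : Real.sqrt (σ ^ 2 - D) ^ 2 = σ ^ 2 - D := Real.sq_sqrt (by linarith)
  have hb : Real.sqrt D ^ 2 = D := Real.sq_sqrt hD.le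
  generalize Real.sqrt (σ ^ 2 - D) = a at *
  generalize Real.sqrt D = b at *
  have hp : 0 < p := lt_of_le_of_lt (sq_nonneg _) hp1
  have hp' : 0 < p' := hp.trans hpp'
  have hA : 0 < σ ^ 2 - D := by linarith
  have hc : σ ^ 2 - 2 * D = a ^ 2 - b ^ 2 := by linarith
  have hcc : (σ ^ 2 - 2 * D) ^ 2 < p * p' := by
    have h1 : (σ ^ 2 - 2 * D) ^ 2 ≤ p ^ 2 := sq_le_sq' (by linarith [abs_le.mp hp2])
      (abs_le.mp hp2).2
    nlinarith
  have hpos : 0 < 1 - (p' + σ ^ 2 - 2 * D) ^ 2 / (4 * p' * (σ ^ 2 - D)) := by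
    rw [sub_pos, div_lt_one (by positivity)]
    have h2 : 0 < (p' - (a - b) ^ 2) * ((a + b) ^ 2 - p') :=
      mul_pos (by linarith) (by linarith)
    have h3 : p' + σ ^ 2 - 2 * D = p' + a ^ 2 - b ^ 2 := by linarith
    rw [h3, ← ha]
    nlinarith
  have hlt : (p + σ ^ 2 - 2 * D) ^ 2 / (4 * p * (σ ^ 2 - D)) <
      (p' + σ ^ 2 - 2 * D) ^ 2 / (4 * p' * (σ ^ 2 - D)) := by
    rw [div_lt_div_iff₀ (by positivity) (by positivity)]
    have h4 : 0 < 4 * (σ ^ 2 - D) * ((p' - p) * (p * p' - (σ ^ 2 - 2 * D) ^ 2)) :=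
      mul_pos (by linarith) (mul_pos (by linarith) (by linarith))
    have h5 : (p' + σ ^ 2 - 2 * D) ^ 2 * (4 * p * (σ ^ 2 - D)) -
        (p + σ ^ 2 - 2 * D) ^ 2 * (4 * p' * (σ ^ 2 - D)) =
        4 * (σ ^ 2 - D) * ((p' - p) * (p * p' - (σ ^ 2 - 2 * D) ^ 2)) := by ring
    linarith
  have := Real.log_lt_log hpos (sub_lt_sub_left hlt 1)
  unfold Rsp
  linarith
end

section
/- The function R_iid is strictly increasing above the point max{0, 2D−σ²}: for all real numbers p, p' with max{0, 2D−σ²} ≤ p < p', one has R_iid(p) < R_iid(p'). -/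
/-- `s*(p)` -/
noncomputable def sStar (σ D p : ℝ) : ℝ :=
  max 0 ((σ ^ 2 - 3 * D + Real.sqrt ((σ ^ 2 - D) ^ 2 + 4 * p * D)) / (4 * D))

/-- `R_iid(p)` -/
noncomputable def Riid (σ D p : ℝ) : ℝ :=
  (1 / 2) * Real.log (1 + 2 * sStar σ D p) +
    sStar σ D p * p / ((1 + 2 * sStar σ D p) * (σ ^ 2 - D)) -
    sStar σ D p * D / (σ ^ 2 - D)

lemma sStar_spec (σ D p : ℝ) (hD : 0 < D) (hDσ : D < σ ^ 2)
    (hp : max 0 (2 * D - σ ^ 2) ≤ p) :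
    ∃ r : ℝ, r = Real.sqrt ((σ ^ 2 - D) ^ 2 + 4 * p * D) ∧
      r ^ 2 = (σ ^ 2 - D) ^ 2 + 4 * p * D ∧ σ ^ 2 - D ≤ r ∧ 3 * D - σ ^ 2 ≤ r ∧
      1 + 2 * sStar σ D p = (σ ^ 2 - D + r) / (2 * D) := by
  have h0 : 0 ≤ p := le_trans (le_max_left _ _) hp
  have h1 : 2 * D - σ ^ 2 ≤ p := le_trans (le_max_right _ _) hp
  have hpD : 0 ≤ p * D := by positivity
  refine ⟨_, rfl, Real.sq_sqrt (by positivity), Real.le_sqrt_of_sq_le (by linarith), ?_, ?_⟩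
  · exact Real.le_sqrt_of_sq_le (by nlinarith)
  · have h3 : 3 * D - σ ^ 2 ≤ Real.sqrt ((σ ^ 2 - D) ^ 2 + 4 * p * D) :=
      Real.le_sqrt_of_sq_le (by nlinarith)
    rw [sStar, max_eq_right (div_nonneg (by linarith) (by linarith))]
    field_simp
    ring

lemma Riid_eq (σ D p u : ℝ) (hDσ : D < σ ^ 2) (hu : 0 < u) (h : 1 + 2 * sStar σ D p = u) :
    Riid σ D p = (1 / 2) * (Real.log u + (1 - 1 / u) * p / (σ ^ 2 - D)
      - (u - 1) * D / (σ ^ 2 - D)) := by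
  have hA : σ ^ 2 - D ≠ 0 := by linarith
  have hs : sStar σ D p = (u - 1) / 2 := by linarith
  rw [Riid, h, hs]
  field_simp

lemma key (A D p p' u v : ℝ) (hA : 0 < A) (hu : 1 ≤ u) (huv : u < v)
    (hpp : p < p') (hv : A * v + p' = D * v ^ 2) (hAv : A ≤ D * v) :
    Real.log u + (1 - 1 / u) * p / A - (u - 1) * D / A <
      Real.log v + (1 - 1 / v) * p' / A - (v - 1) * D / A := by
  have hu0 : 0 < u := by linarith
  have hv0 : 0 < v := by linarith
  have h1 : (1 - 1 / u) * p / A ≤ (1 - 1 / u) * p' / A := by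
    have : 0 ≤ 1 - 1 / u := by
      rw [sub_nonneg, div_le_one hu0]; exact hu
    gcongr
  have hlog : Real.log (u / v) < u / v - 1 :=
    Real.log_lt_sub_one_of_pos (by positivity) (by
      intro h
      rw [div_eq_one_iff_eq hv0.ne'] at h
      linarith)
  rw [Real.log_div hu0.ne' hv0.ne'] at hlog
  have hid : ((1 - 1 / v) * p' / A - (v - 1) * D / A) - ((1 - 1 / u) * p' / A - (u - 1) * D / A)
      - (u / v - 1) = (D * v - A) * (v - u) ^ 2 / (A * u * v) := by
    have : p' = D * v ^ 2 - A * v := by linarith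
    subst this
    field_simp
    ring
  have hn : 0 ≤ (D * v - A) * (v - u) ^ 2 / (A * u * v) := by
    have : 0 ≤ D * v - A := by linarith
    positivity
  linarith

theorem stmt6 (σ D : ℝ) (hσ : 0 < σ) (hD : 0 < D) (hDσ : D < σ ^ 2)
    (p p' : ℝ) (hp : max 0 (2 * D - σ ^ 2) ≤ p) (hpp' : p < p') :
    Riid σ D p < Riid σ D p' := by
  obtain ⟨r, hr, hr2, hrA, hrD, hs⟩ := sStar_spec σ D p hD hDσ hp
  obtain ⟨r', hr', hr2', hrA', hrD', hs'⟩ := sStar_spec σ D p' hD hDσ (hp.trans hpp'.le)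
  have hA : 0 < σ ^ 2 - D := by linarith
  have hrr : r < r' := by
    have : p * D < p' * D := by gcongr
    nlinarith
  have hu : 1 ≤ (σ ^ 2 - D + r) / (2 * D) := by
    rw [le_div_iff₀ (by positivity)]; linarith
  have huv : (σ ^ 2 - D + r) / (2 * D) < (σ ^ 2 - D + r') / (2 * D) := by gcongr
  rw [Riid_eq σ D p _ hDσ (by linarith) hs, Riid_eq σ D p' _ hDσ (by linarith) hs']
  refine mul_lt_mul_of_pos_left (key _ D p p' _ _ hA hu huv hpp' ?_ ?_) (by norm_num)
  · field_simp
    linear_combination -hr2'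
  · field_simp
    linarith
end

section
/- The function R_sp admits the Taylor expansion R_sp(p) = (1/2)·log(σ²/D) + (p−σ²)/(2σ²) + O((p−σ²)²) as p → σ²: there exist δ > 0 and C > 0 such that for every p with |p − σ²| < δ (in particular r₁² < p < r₂²), one has |R_sp(p) − (1/2)·log(σ²/D) − (p−σ²)/(2σ²)| ≤ C·(p−σ²)². -/
theorem stmt8 (σ D : ℝ) (hσ : 0 < σ) (hD : 0 < D) (hDσ : D < σ ^ 2) :
    ∃ δ > (0 : ℝ), ∃ C > (0 : ℝ), ∀ p : ℝ, |p - σ ^ 2| < δ →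
      ((Real.sqrt (σ ^ 2 - D) - Real.sqrt D) ^ 2 < p ∧
        p < (Real.sqrt (σ ^ 2 - D) + Real.sqrt D) ^ 2) ∧
      |Rsp σ D p - (1 / 2) * Real.log (σ ^ 2 / D) - (p - σ ^ 2) / (2 * σ ^ 2)| ≤
        C * (p - σ ^ 2) ^ 2 := by
  have ha : 0 < σ ^ 2 - D := by linarith
  have hs : 0 < σ ^ 2 := by positivity
  unfold Rsp
  generalize σ ^ 2 = s at *
  obtain ⟨a, rfl⟩ : ∃ a, s = a + D := ⟨s - D, by ring⟩
  have e0 : a + D - D = a := by ring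
  rw [e0] at ha ⊢
  have hA : 0 < Real.sqrt a := Real.sqrt_pos.2 ha
  have hB : 0 < Real.sqrt D := Real.sqrt_pos.2 hD
  have hA2 := Real.sq_sqrt ha.le
  have hB2 := Real.sq_sqrt hD.le
  have hAB : 0 < Real.sqrt a * Real.sqrt D := by positivity
  refine ⟨min ((a + D) / 2) (Real.sqrt a * Real.sqrt D), by positivity,
    1 / (4 * a * D) + 1 / (a + D) ^ 2, by positivity, ?_⟩
  intro p hp
  obtain ⟨x, rfl⟩ : ∃ x, p = a + D + x := ⟨p - (a + D), by ring⟩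
  have e1 : a + D + x - (a + D) = x := by ring
  rw [e1] at hp ⊢
  rw [lt_min_iff, abs_lt, abs_lt] at hp
  obtain ⟨⟨h1, h2⟩, h3, h4⟩ := hp
  refine ⟨⟨by nlinarith, by nlinarith⟩, ?_⟩
  have hx2 : x ^ 2 < a * D := by
    have : x ^ 2 < (Real.sqrt a * Real.sqrt D) ^ 2 := sq_lt_sq' h3 h4
    rwa [mul_pow, hA2, hB2] at this
  obtain ⟨u, hu⟩ : ∃ u, u = x ^ 2 / (4 * a * D) := ⟨_, rfl⟩
  obtain ⟨t, ht⟩ : ∃ t, t = x / (a + D) := ⟨_, rfl⟩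
  have hu0 : 0 ≤ u := by rw [hu]; positivity
  have hu1 : u < 1 / 2 := by
    rw [hu, div_lt_iff₀ (by positivity)]; nlinarith
  have ht1 : -(1 / 2) < t := by rw [ht, lt_div_iff₀ hs]; linarith
  have hp0 : 0 < a + D + x := by linarith
  have earg : 1 - (a + D + x + (a + D) - 2 * D) ^ 2 / (4 * (a + D + x) * a)
      = (1 - u) / (((a + D) / D) * (1 + t)) := by
    have : 1 + t = (a + D + x) / (a + D) := by rw [ht]; field_simp
    rw [this, hu]
    field_simp
    ring
  have h1u : 0 < 1 - u := by linarith
  have h1t : 0 < 1 + t := by linarith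
  rw [earg, Real.log_div h1u.ne' (by positivity), Real.log_mul (by positivity) h1t.ne']
  have et : x / (2 * (a + D)) = t / 2 := by rw [ht]; field_simp
  have eC : (1 / (4 * a * D) + 1 / (a + D) ^ 2) * x ^ 2 = u + t ^ 2 := by
    rw [hu, ht]; field_simp
  rw [et, eC]
  have l1 := Real.log_le_sub_one_of_pos h1u
  have l2 := Real.log_le_sub_one_of_pos h1t
  have l3 := Real.one_sub_inv_le_log_of_pos h1u
  have l4 := Real.one_sub_inv_le_log_of_pos h1t
  have k3 : (1 - u)⁻¹ ≤ 1 + 2 * u := by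
    rw [inv_le_iff_one_le_mul₀ h1u]; nlinarith
  have k4 : (1 + t)⁻¹ ≤ 1 - t + 2 * t ^ 2 := by
    rw [inv_le_iff_one_le_mul₀ h1t]; nlinarith [sq_nonneg t]
  have := sq_nonneg t
  rw [abs_le]
  constructor <;> linarith
end

section
/- The function R_iid admits the Taylor expansion R_iid(p) = (1/2)·log(σ²/D) + (p−σ²)/(2σ²) + O((p−σ²)²) as p → σ²: there exist δ > 0 and C > 0 such that for every p with |p − σ²| < δ, one has |R_iid(p) − (1/2)·log(σ²/D) − (p−σ²)/(2σ²)| ≤ C·(p−σ²)². -/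
set_option maxHeartbeats 1000000 in
theorem stmt9 (σ D : ℝ) (hσ : 0 < σ) (hD : 0 < D) (hDσ : D < σ ^ 2) :
    ∃ δ > (0 : ℝ), ∃ C > (0 : ℝ), ∀ p : ℝ, |p - σ ^ 2| < δ →
      |Riid σ D p - (1 / 2) * Real.log (σ ^ 2 / D) - (p - σ ^ 2) / (2 * σ ^ 2)| ≤
        C * (p - σ ^ 2) ^ 2 := by
  unfold Riid sStar
  have hv : 0 < σ ^ 2 := by positivity
  generalize σ ^ 2 = v at *
  have hw : 0 < v - D := by linarith
  refine ⟨min v (2 * (v - D)), lt_min hv (by linarith),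
    (1 / v + 1 / (v - D)) * (1 / D), by positivity, fun p hp => ?_⟩
  obtain ⟨h1, h2⟩ := lt_min_iff.1 hp
  have hp0 : 0 < p := by linarith [(abs_lt.1 h1).1]
  have hp1 : 2 * D - v < p := by linarith [(abs_lt.1 h2).1]
  have hq : Real.sqrt ((v - D) ^ 2 + 4 * p * D) ^ 2 = (v - D) ^ 2 + 4 * p * D :=
    Real.sq_sqrt (by positivity)
  have hq3 : 3 * D - v ≤ Real.sqrt ((v - D) ^ 2 + 4 * p * D) :=
    Real.le_sqrt_of_sq_le (by nlinarith)
  generalize Real.sqrt ((v - D) ^ 2 + 4 * p * D) = q at *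
  rw [max_eq_right (div_nonneg (by linarith) (by positivity))]
  obtain ⟨u, hu⟩ : ∃ u, u = (v - D + q) / (2 * D) := ⟨_, rfl⟩
  have hqu : q = 2 * D * u - (v - D) := by rw [hu]; field_simp; ring
  have hs : (v - 3 * D + q) / (4 * D) = (u - 1) / 2 := by rw [hqu]; field_simp; ring
  rw [hs]
  have hu1 : 1 ≤ u := by
    rw [hu, le_div_iff₀ (by positivity)]; linarith
  have hpu : p = D * u ^ 2 - (v - D) * u := by
    rw [hqu] at hq
    have : 4 * D * p = 4 * D * (D * u ^ 2 - (v - D) * u) := by linarith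
    exact mul_left_cancel₀ (by positivity) this
  have hu0 : 0 < u := by linarith
  obtain ⟨h, hh⟩ : ∃ h, h = u - v / D := ⟨_, rfl⟩
  have hDh : D * u = D * h + v := by rw [hh]; field_simp; ring
  have hpv : p - v = D * h * (u + 1) := by
    rw [hpu]; linear_combination (u + 1) * hDh
  have hlog : Real.log u = Real.log (v / D) + Real.log (D * u / v) := by
    rw [← Real.log_mul (by positivity) (by positivity)]; congr 1; field_simp
  have hy : 0 < D * u / v := by positivity
  have hle := Real.log_le_sub_one_of_pos hy
  have hge := Real.one_sub_inv_le_log_of_pos hy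
  have key : (1 / 2) * Real.log (1 + 2 * ((u - 1) / 2)) +
      (u - 1) / 2 * p / ((1 + 2 * ((u - 1) / 2)) * (v - D)) -
      (u - 1) / 2 * D / (v - D) - 1 / 2 * Real.log (v / D) - (p - v) / (2 * v)
      = 1 / 2 * ((Real.log (D * u / v) - (D * u / v - 1))
        + D * h ^ 2 * (D / (v * (v - D)))) := by
    have e : 1 + 2 * ((u - 1) / 2) = u := by ring
    rw [e, hlog, hpu, hh]
    field_simp
    ring
  rw [key]
  have b1 : -(D / v * h ^ 2) ≤ Real.log (D * u / v) - (D * u / v - 1) := by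
    have e : (1 - (D * u / v)⁻¹) - (D * u / v - 1) = -(D / v * h ^ 2) / u := by
      rw [hh]; field_simp; ring
    have : -(D / v * h ^ 2) ≤ -(D / v * h ^ 2) / u := by
      rw [neg_div, neg_le_neg_iff]
      exact div_le_self (by positivity) hu1
    linarith
  have b2 : 0 ≤ D * h ^ 2 * (D / (v * (v - D))) := by positivity
  have b3 : D * h ^ 2 * (D / (v * (v - D))) ≤ (D / (v - D)) * h ^ 2 := by
    have e : D * h ^ 2 * (D / (v * (v - D))) = (D / (v - D)) * h ^ 2 * (D / v) := by
      field_simp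
    rw [e]
    exact mul_le_of_le_one_right (by positivity) ((div_le_one hv).2 hDσ.le)
  have b4 : (D / v + D / (v - D)) * h ^ 2 ≤
      (1 / v + 1 / (v - D)) * (1 / D) * (p - v) ^ 2 := by
    have e : (1 / v + 1 / (v - D)) * (1 / D) * (p - v) ^ 2
      = (D / v + D / (v - D)) * h ^ 2 * (u + 1) ^ 2 := by
      rw [hpv]; field_simp
    rw [e]
    exact le_mul_of_one_le_right (by positivity) (by nlinarith)
  have b5 : 0 ≤ D / v * h ^ 2 := by positivity
  have b6 : 0 ≤ D / (v - D) * h ^ 2 := by positivity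
  rw [abs_le]
  rw [add_mul] at b4
  constructor <;> linarith
end

section
/- Monotonicity of the spherical non-excess-distortion probability: for every integer k ≥ 1 and all real numbers p, p' with |σ²−2D| ≤ p ≤ p', one has Ψ_sp(k,p') ≤ Ψ_sp(k,p). -/
open MeasureTheory Metric

/-- Scalar monotonicity underlying the inclusion of the spherical caps. -/
lemma scalar_aux (a q q' u : ℝ) (hq : 0 ≤ q) (hqq : q ≤ q') (ha : a ≤ q ^ 2)
    (h : q' ^ 2 + a ≤ q' * u) : q ^ 2 + a ≤ q * u := by
  rcases eq_or_lt_of_le (hq.trans hqq) with h0 | h0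
  · have : q = q' := by linarith
    rw [this]; exact h
  · have h1 : 0 ≤ (q' - q) * (q * q' - a) :=
      mul_nonneg (by linarith) (by nlinarith)
    have h2 : q * (q' ^ 2 + a) ≤ q * (q' * u) := mul_le_mul_of_nonneg_left h hq
    have h3 : q' * (q ^ 2 + a) ≤ q' * (q * u) := by nlinarith
    exact le_of_mul_le_mul_left h3 h0

lemma norm_expand (k : ℕ) (c : ℝ) (x : EuclideanSpace ℝ (Fin k)) :
    ‖(EuclideanSpace.equiv (Fin k) ℝ).symm (fun _ => c) - x‖ ^ 2
      = k * c ^ 2 - 2 * c * (∑ i, x i) + ‖x‖ ^ 2 := by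
  rw [EuclideanSpace.norm_sq_eq, EuclideanSpace.norm_sq_eq]
  have : ∀ i, ‖((EuclideanSpace.equiv (Fin k) ℝ).symm (fun _ => c) - x) i‖ ^ 2
      = c ^ 2 - 2 * c * x i + ‖x i‖ ^ 2 := by
    intro i
    simp only [Real.norm_eq_abs, sq_abs]
    simp
    ring
  simp only [this, Finset.sum_add_distrib, Finset.sum_sub_distrib, ← Finset.mul_sum]
  simp

theorem stmt15 (σ D : ℝ) (hσ : 0 < σ) (hD : 0 < D) (hDσ : D < σ ^ 2)
    (k : ℕ) (hk : 1 ≤ k) (p p' : ℝ)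
    (hp : |σ ^ 2 - 2 * D| ≤ p) (hpp' : p ≤ p') :
    PsiSp σ D k p' ≤ PsiSp σ D k p := by
  have hk' : (0 : ℝ) < k := by exact_mod_cast hk
  have hp0 : 0 ≤ p := (abs_nonneg _).trans hp
  have hms : ∀ v : EuclideanSpace ℝ (Fin k),
      MeasurableSet {x : EuclideanSpace ℝ (Fin k) | ‖v - x‖ ^ 2 ≤ k * D} := fun v =>
    (isClosed_le (by fun_prop) (by fun_prop)).measurableSet
  have hmf : Measurable (fun x : sphere (0 : EuclideanSpace ℝ (Fin k)) 1 =>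
      Real.sqrt (k * (σ ^ 2 - D)) • (x : EuclideanSpace ℝ (Fin k))) := by
    fun_prop
  unfold PsiSp sphereUniform
  simp only [Measure.smul_apply, smul_eq_mul]
  rw [Measure.map_apply hmf (hms _), Measure.map_apply hmf (hms _)]
  apply ENNReal.toReal_mono
  · refine ne_top_of_le_ne_top ENNReal.one_ne_top
      (le_trans (mul_le_mul_right (measure_mono (Set.subset_univ _)) _) ?_)
    exact ENNReal.inv_mul_le_one _
  · refine mul_le_mul_right (measure_mono ?_) _
    intro x hx
    simp only [Set.mem_preimage, Set.mem_setOf_eq] at hx ⊢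
    rw [norm_expand] at hx ⊢
    have hn : ‖Real.sqrt (k * (σ ^ 2 - D)) • (x : EuclideanSpace ℝ (Fin k))‖ ^ 2
        = k * (σ ^ 2 - D) := by
      rw [norm_smul, norm_eq_of_mem_sphere, mul_one, Real.norm_eq_abs, sq_abs, Real.sq_sqrt]
      exact mul_nonneg hk'.le (by linarith)
    rw [hn] at hx ⊢
    generalize (∑ i, (Real.sqrt (k * (σ ^ 2 - D)) • (x : EuclideanSpace ℝ (Fin k))) i) = S at *
    have key := scalar_aux (σ ^ 2 - 2 * D) (√p) (√p') (2 * S / k) (Real.sqrt_nonneg _)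
      (Real.sqrt_le_sqrt hpp') (by rw [Real.sq_sqrt hp0]; exact (le_abs_self _).trans hp)
    have e : ∀ q : ℝ, q ^ 2 + (σ ^ 2 - 2 * D) ≤ q * (2 * S / k) ↔
        k * q ^ 2 - 2 * q * S + k * (σ ^ 2 - D) ≤ k * D := by
      intro q
      rw [← mul_div_assoc, le_div_iff₀ hk']
      constructor <;> intro h <;> linarith
    exact (e _).1 (key ((e _).2 hx))
end

section
/- Monotonicity of the i.i.d.-Gaussian non-excess-distortion probability: for every integer k ≥ 1 and all real numbers p, p' with |σ²−2D| ≤ p ≤ p', one has Ψ_iid(k,p') ≤ Ψ_iid(k,p). -/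
open MeasureTheory ProbabilityTheory

/-- `Ψ_iid(k,p)`: the probability that a random vector `Ŝ ∈ ℝ^k` with i.i.d. coordinates
distributed as `N(0, σ²-D)` satisfies `(1/k)‖s - Ŝ‖² ≤ D`, where `s` is a fixed vector with
`‖s‖² = kp` (here the constant vector with entries `√p`). -/
noncomputable def PsiIid (σ D : ℝ) (k : ℕ) (p : ℝ) : ℝ :=
  ((Measure.pi fun _ : Fin k => gaussianReal 0 (Real.toNNReal (σ ^ 2 - D)))
    {x : Fin k → ℝ | ∑ i, (Real.sqrt p - x i) ^ 2 ≤ k * D}).toReal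

lemma aux_one (v : NNReal) (hv : v ≠ 0) (a b T : ℝ) (ha : 0 ≤ a) (hab : a ≤ b) :
    gaussianReal 0 v {x : ℝ | (b - x) ^ 2 ≤ T} ≤ gaussianReal 0 v {x : ℝ | (a - x) ^ 2 ≤ T} := by
  set B := {x : ℝ | (b - x) ^ 2 ≤ T} with hB
  set A := {x : ℝ | (a - x) ^ 2 ≤ T} with hA
  have mB : MeasurableSet B := measurableSet_le (by fun_prop) (by fun_prop)
  have mA : MeasurableSet A := measurableSet_le (by fun_prop) (by fun_prop)
  rw [← measure_inter_add_sdiff B mA, ← measure_inter_add_sdiff A mB, Set.inter_comm A B]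
  gcongr 1
  rw [gaussianReal_apply 0 hv, gaussianReal_apply 0 hv,
    ← lintegral_indicator (mB.diff mA), ← lintegral_indicator (mA.diff mB),
    ← lintegral_sub_left_eq_self ((A \ B).indicator (gaussianPDF 0 v)) (a + b)]
  apply lintegral_mono
  intro x
  by_cases hx : x ∈ B \ A
  · have h1 : (b - x) ^ 2 ≤ T := hx.1
    have h2 : ¬ (a - x) ^ 2 ≤ T := hx.2
    have hx' : a + b - x ∈ A \ B := by
      constructor
      · show (a - (a + b - x)) ^ 2 ≤ T
        nlinarith
      · show ¬ (b - (a + b - x)) ^ 2 ≤ T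
        intro h
        apply h2
        nlinarith
    simp only [Set.indicator_of_mem hx, Set.indicator_of_mem hx', gaussianPDF, gaussianPDFReal]
    apply ENNReal.ofReal_le_ofReal
    have h3 : (a + b - x - 0) ^ 2 ≤ (x - 0) ^ 2 := by
      push Not at h2
      have h4 : 0 < (b - a) * (2 * x - (a + b)) := by nlinarith
      have h5 : 0 < 2 * x - (a + b) := by
        by_contra h
        push Not at h
        nlinarith
      nlinarith
    gcongr
  · simp [Set.indicator_of_notMem hx]

lemma aux_pi (v : NNReal) (hv : v ≠ 0) (a b : ℝ) (ha : 0 ≤ a) (hab : a ≤ b) (n : ℕ) :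
    ∀ T : ℝ, (Measure.pi fun _ : Fin n => gaussianReal 0 v)
        {x : Fin n → ℝ | ∑ i, (b - x i) ^ 2 ≤ T} ≤
      (Measure.pi fun _ : Fin n => gaussianReal 0 v)
        {x : Fin n → ℝ | ∑ i, (a - x i) ^ 2 ≤ T} := by
  induction n with
  | zero => intro T; simp
  | succ n ih =>
    intro T
    have key : ∀ c : ℝ, (Measure.pi fun _ : Fin (n + 1) => gaussianReal 0 v)
        {x : Fin (n + 1) → ℝ | ∑ i, (c - x i) ^ 2 ≤ T} =
        ((gaussianReal 0 v).prod (Measure.pi fun _ : Fin n => gaussianReal 0 v))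
        {q : ℝ × (Fin n → ℝ) | (c - q.1) ^ 2 + ∑ i, (c - q.2 i) ^ 2 ≤ T} := by
      intro c
      have h := measurePreserving_piFinSuccAbove (fun _ : Fin (n + 1) => gaussianReal 0 v) 0
      rw [← h.measure_preimage_equiv]
      congr 1
      ext x
      simp [Fin.sum_univ_succ, MeasurableEquiv.piFinSuccAbove, Fin.tail]
    have meas : ∀ c d : ℝ, MeasurableSet
        {q : ℝ × (Fin n → ℝ) | (c - q.1) ^ 2 + ∑ i, (d - q.2 i) ^ 2 ≤ T} := fun c d =>
      measurableSet_le (by fun_prop) (by fun_prop)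
    rw [key, key]
    refine le_trans (b := ((gaussianReal 0 v).prod (Measure.pi fun _ : Fin n => gaussianReal 0 v))
        {q : ℝ × (Fin n → ℝ) | (b - q.1) ^ 2 + ∑ i, (a - q.2 i) ^ 2 ≤ T}) ?_ ?_
    ·     rw [Measure.prod_apply (meas _ _), Measure.prod_apply (meas _ _)]
          apply lintegral_mono
          intro x
          have := ih (T - (b - x) ^ 2)
          simpa only [Set.preimage_setOf_eq, le_sub_iff_add_le'] using this
    ·     rw [Measure.prod_apply_symm (meas _ _), Measure.prod_apply_symm (meas _ _)]
          apply lintegral_mono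
          intro y
          have := aux_one v hv a b (T - ∑ i, (a - y i) ^ 2) ha hab
          simpa only [Set.preimage_setOf_eq, le_sub_iff_add_le] using this

theorem stmt16 (σ D : ℝ) (hσ : 0 < σ) (hD : 0 < D) (hDσ : D < σ ^ 2)
    (k : ℕ) (hk : 1 ≤ k) (p p' : ℝ)
    (hp : |σ ^ 2 - 2 * D| ≤ p) (hpp' : p ≤ p') :
    PsiIid σ D k p' ≤ PsiIid σ D k p := by
  unfold PsiIid
  apply ENNReal.toReal_mono (measure_ne_top _ _)
  apply aux_pi _ _ _ _ (Real.sqrt_nonneg _) (Real.sqrt_le_sqrt hpp')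
  have : 0 < σ ^ 2 - D := by linarith
  exact (Real.toNNReal_pos.mpr this).ne'
end
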